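/- arXiv:math/0509215 — 3 statements merged into one kernel-verified Lean document; each statement's English description precedes it below -/
import Mathlib

section
/- Let A : [0,1] → ℝ⁴ be a topological embedding whose image lies in the half-space ℝ³₊ = {x ∈ ℝ⁴ : x₄ = 0, x₃ ≥ 0}, such that A(0) ≠ A(1), the endpoints A(0), A(1) lie in the boundary plane {x₃ = 0, x₄ = 0}, and A(t) has x₃-coordinate strictly positive for all t ∈ (0,1). Then the spun set Spin(A([0,1])) = {R_θ(A(t)) : t ∈ [0,1], θ ∈ ℝ}, equipped with the subspace topology from ℝ⁴, is homeomorphic to the unit 2-sphere {y ∈ ℝ³ : ‖y‖ = 1}. -/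
/-- The spinning rotation `R_θ` on points of `ℝ⁴` (with fourth coordinate zero):
`R_θ(x) = (x₁, x₂, x₃·cos θ, x₃·sin θ)`. -/
noncomputable def spinRot (θ : ℝ) (x : EuclideanSpace ℝ (Fin 4)) : EuclideanSpace ℝ (Fin 4) :=
  (WithLp.equiv 2 (Fin 4 → ℝ)).symm ![x 0, x 1, x 2 * Real.cos θ, x 2 * Real.sin θ]

/-- The half-space `ℝ³₊ = {x ∈ ℝ⁴ : x₄ = 0, x₃ ≥ 0}`. -/
def halfSpace3 : Set (EuclideanSpace ℝ (Fin 4)) := {x | x 3 = 0 ∧ 0 ≤ x 2}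

/-- The boundary plane `{x ∈ ℝ⁴ : x₃ = 0, x₄ = 0}`. -/
def boundaryPlane : Set (EuclideanSpace ℝ (Fin 4)) := {x | x 2 = 0 ∧ x 3 = 0}

/-- The spun set `Spin(X) = {R_θ(x) : x ∈ X, θ ∈ ℝ}`. -/
def SpinSet (X : Set (EuclideanSpace ℝ (Fin 4))) : Set (EuclideanSpace ℝ (Fin 4)) :=
  {y | ∃ x ∈ X, ∃ θ : ℝ, y = spinRot θ x}

/-- Two continuous maps from a compact space to Hausdorff spaces with the same fibres have
homeomorphic ranges. -/
theorem nonempty_homeomorph_range_of_eq_iff {K Y Z : Type*} [TopologicalSpace K] [CompactSpace K]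
    [TopologicalSpace Y] [T2Space Y] [TopologicalSpace Z] [T2Space Z] {f : K → Y} {g : K → Z}
    (hf : Continuous f) (hg : Continuous g) (hfg : ∀ p q, f p = f q ↔ g p = g q) :
    Nonempty (Set.range f ≃ₜ Set.range g) := by
  let F : C(K, Set.range f) := ⟨Set.rangeFactorization f, hf.rangeFactorization⟩
  let G : C(K, Set.range g) := ⟨Set.rangeFactorization g, hg.rangeFactorization⟩
  have hF : Topology.IsQuotientMap F :=
    F.continuous.isClosedMap.isQuotientMap F.continuous Set.rangeFactorization_surjective
  have hG : Topology.IsQuotientMap G :=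
    G.continuous.isClosedMap.isQuotientMap G.continuous Set.rangeFactorization_surjective
  have hker : Setoid.ker F = Setoid.ker G := by
    ext p q
    simpa [Setoid.ker_def, F, G, Set.rangeFactorization, Subtype.ext_iff] using hfg p q
  have e := hF.homeomorph
  rw [hker] at e
  exact ⟨e.symm.trans hG.homeomorph⟩

/-- Nonnegative real multiples of unit complex numbers agree iff the radii agree and,
unless the radius vanishes, so do the directions. -/
theorem radius_mul_circle_eq_iff {r s : ℝ} (hr : 0 ≤ r) (hs : 0 ≤ s) (z w : Circle) :
    (r * (z : ℂ).re = s * (w : ℂ).re ∧ r * (z : ℂ).im = s * (w : ℂ).im) ↔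
      r = s ∧ (r = 0 ∨ z = w) := by
  have key : (r * (z : ℂ).re = s * (w : ℂ).re ∧ r * (z : ℂ).im = s * (w : ℂ).im) ↔
      (r : ℂ) * z = s * w := by
    simp [Complex.ext_iff]
  rw [key]
  constructor
  · intro h
    have hrs : r = s := by
      simpa [abs_of_nonneg hr, abs_of_nonneg hs, Circle.norm_coe] using congrArg norm h
    subst hrs
    simpa [or_comm, Circle.ext_iff] using h
  · rintro ⟨rfl, rfl | rfl⟩ <;> simp

/-- The spinning rotation with the angle replaced by a point of the unit circle. -/
noncomputable def spinCircle (x : EuclideanSpace ℝ (Fin 4)) (z : Circle) :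
    EuclideanSpace ℝ (Fin 4) :=
  WithLp.toLp 2 ![x 0, x 1, x 2 * (z : ℂ).re, x 2 * (z : ℂ).im]

theorem spinRot_eq_spinCircle (θ : ℝ) (x : EuclideanSpace ℝ (Fin 4)) :
    spinRot θ x = spinCircle x (Circle.exp θ) := by
  simp [spinRot, spinCircle, Circle.coe_exp, Complex.exp_ofReal_mul_I_re,
    Complex.exp_ofReal_mul_I_im]

theorem spinSet_range_eq {ι : Type*} (A : ι → EuclideanSpace ℝ (Fin 4)) :
    SpinSet (Set.range A) = Set.range fun p : ι × Circle => spinCircle (A p.1) p.2 := by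
  ext y
  constructor
  · rintro ⟨_, ⟨t, rfl⟩, θ, rfl⟩
    exact ⟨(t, Circle.exp θ), (spinRot_eq_spinCircle θ (A t)).symm⟩
  · rintro ⟨⟨t, z⟩, rfl⟩
    refine ⟨_, ⟨t, rfl⟩, Complex.arg z, ?_⟩
    rw [spinRot_eq_spinCircle, Circle.exp_arg]

theorem spinCircle_eq_iff {x y : EuclideanSpace ℝ (Fin 4)} (hx : x ∈ halfSpace3)
    (hy : y ∈ halfSpace3) (z w : Circle) :
    spinCircle x z = spinCircle y w ↔ x = y ∧ (x 2 = 0 ∨ z = w) := by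
  have hxy : x = y ↔ x 0 = y 0 ∧ x 1 = y 1 ∧ x 2 = y 2 := by
    simp [PiLp.ext_iff, Fin.forall_fin_succ, hx.1, hy.1]
  have h := radius_mul_circle_eq_iff hx.2 hy.2 z w
  have hs : spinCircle x z = spinCircle y w ↔ x 0 = y 0 ∧ x 1 = y 1 ∧
      x 2 * (z : ℂ).re = y 2 * (w : ℂ).re ∧ x 2 * (z : ℂ).im = y 2 * (w : ℂ).im := by
    simp [spinCircle]
  rw [hs, h, hxy]
  tauto

/-- The parametrization of the unit 2-sphere by height and longitude, collapsing the two ends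
of the cylinder to the poles. -/
noncomputable def sphereParam (p : Set.Icc (0 : ℝ) 1 × Circle) : EuclideanSpace ℝ (Fin 3) :=
  WithLp.toLp 2 ![2 * (p.1 : ℝ) - 1, 2 * Real.sqrt (p.1 * (1 - p.1)) * (p.2 : ℂ).re,
    2 * Real.sqrt (p.1 * (1 - p.1)) * (p.2 : ℂ).im]

theorem continuous_sphereParam : Continuous sphereParam := by
  unfold sphereParam
  refine (PiLp.continuous_toLp 2 _).comp (continuous_pi fun i => ?_)
  fin_cases i <;> simp <;> fun_prop

theorem sphereParam_eq_iff (s t : Set.Icc (0 : ℝ) 1) (z w : Circle) :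
    sphereParam (s, z) = sphereParam (t, w) ↔
      s = t ∧ (Real.sqrt (s * (1 - s)) = 0 ∨ z = w) := by
  have h := radius_mul_circle_eq_iff (mul_nonneg zero_le_two (Real.sqrt_nonneg (s * (1 - s))))
    (mul_nonneg zero_le_two (Real.sqrt_nonneg (t * (1 - t)))) z w
  have hs : sphereParam (s, z) = sphereParam (t, w) ↔ (s : ℝ) = t ∧
      2 * Real.sqrt (s * (1 - s)) * (z : ℂ).re = 2 * Real.sqrt (t * (1 - t)) * (w : ℂ).re ∧
      2 * Real.sqrt (s * (1 - s)) * (z : ℂ).im = 2 * Real.sqrt (t * (1 - t)) * (w : ℂ).im := by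
    simp [sphereParam]
  rw [hs, h, mul_eq_zero_iff_left two_ne_zero, Subtype.ext_iff]
  constructor
  · rintro ⟨hst, -, hzw⟩
    exact ⟨hst, hzw⟩
  · rintro ⟨hst, hzw⟩
    exact ⟨hst, by rw [hst], hzw⟩

theorem mem_unit_sphere_iff (y : EuclideanSpace ℝ (Fin 3)) :
    y ∈ Metric.sphere (0 : EuclideanSpace ℝ (Fin 3)) 1 ↔ y 0 ^ 2 + y 1 ^ 2 + y 2 ^ 2 = 1 := by
  simp [EuclideanSpace.norm_eq, Fin.sum_univ_three]

theorem range_sphereParam :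
    Set.range sphereParam = Metric.sphere (0 : EuclideanSpace ℝ (Fin 3)) 1 := by
  ext y
  rw [mem_unit_sphere_iff]
  constructor
  · rintro ⟨⟨⟨t, ht0, ht1⟩, z⟩, rfl⟩
    have hsq := Real.sq_sqrt (mul_nonneg ht0 (sub_nonneg.2 ht1))
    have hz : (z : ℂ).re * (z : ℂ).re + (z : ℂ).im * (z : ℂ).im = 1 := by
      rw [← Complex.normSq_apply, Circle.normSq_coe]
    simp only [sphereParam, Matrix.cons_val]
    linear_combination 4 * hsq + 4 * Real.sqrt (t * (1 - t)) ^ 2 * hz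
  · intro hy
    have hy0 : |y 0| ≤ 1 := by
      rw [← sq_le_one_iff_abs_le_one]
      nlinarith [sq_nonneg (y 1), sq_nonneg (y 2)]
    obtain ⟨hl, hu⟩ := abs_le.1 hy0
    set w : ℂ := ⟨y 1, y 2⟩ with hw
    have hr : 2 * Real.sqrt ((1 + y 0) / 2 * (1 - (1 + y 0) / 2)) = ‖w‖ := by
      rw [← sq_eq_sq₀ (by positivity) (norm_nonneg _), mul_pow,
        Real.sq_sqrt (mul_nonneg (by linarith) (by linarith)), Complex.sq_norm,
        Complex.normSq_apply]
      simp only [hw]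
      linear_combination -hy
    have hwz : (‖w‖ : ℂ) * Circle.exp (Complex.arg w) = w := by
      rw [Circle.coe_exp, Complex.norm_mul_exp_arg_mul_I]
    refine ⟨(⟨(1 + y 0) / 2, by linarith, by linarith⟩, Circle.exp (Complex.arg w)), ?_⟩
    have hre := congrArg Complex.re hwz
    have him := congrArg Complex.im hwz
    rw [Complex.re_ofReal_mul] at hre
    rw [Complex.im_ofReal_mul] at him
    ext i
    fin_cases i
    · simp only [sphereParam, Fin.zero_eta, Matrix.cons_val]
      ring
    · simp only [sphereParam, hr]
      exact hre
    · simp only [sphereParam, hr]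
      exact him

/-- The spin of an embedded arc in the half-space, with endpoints on the boundary plane and
interior strictly above it, is homeomorphic to the 2-sphere. -/
theorem spin_of_arc_homeomorphic_sphere
    (A : Set.Icc (0 : ℝ) 1 → EuclideanSpace ℝ (Fin 4))
    (hemb : Topology.IsEmbedding A)
    (hhalf : ∀ t, A t ∈ halfSpace3)
    (hne : A ⟨0, by norm_num⟩ ≠ A ⟨1, by norm_num⟩)
    (h0 : A ⟨0, by norm_num⟩ ∈ boundaryPlane)
    (h1 : A ⟨1, by norm_num⟩ ∈ boundaryPlane)
    (hint : ∀ t : Set.Icc (0 : ℝ) 1, 0 < (t : ℝ) → (t : ℝ) < 1 → 0 < A t 2) :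
    Nonempty (↥(SpinSet (Set.range A)) ≃ₜ ↥(Metric.sphere (0 : EuclideanSpace ℝ (Fin 3)) 1)) := by
  have ht : ∀ t : Set.Icc (0 : ℝ) 1, A t 2 = 0 ↔ Real.sqrt (t * (1 - t)) = 0 := by
    rintro ⟨t, ht0, ht1⟩
    rw [Real.sqrt_eq_zero (mul_nonneg ht0 (sub_nonneg.2 ht1)), mul_eq_zero, sub_eq_zero]
    constructor
    · intro h
      by_contra hc
      rw [not_or] at hc
      exact (hint ⟨t, ht0, ht1⟩ (lt_of_le_of_ne ht0 (Ne.symm hc.1))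
        (lt_of_le_of_ne ht1 (Ne.symm hc.2))).ne' h
    · rintro (rfl | rfl)
      exacts [h0.1, h1.1]
  have hfib : ∀ p q : Set.Icc (0 : ℝ) 1 × Circle,
      spinCircle (A p.1) p.2 = spinCircle (A q.1) q.2 ↔ sphereParam p = sphereParam q := by
    rintro ⟨s, z⟩ ⟨t, w⟩
    rw [spinCircle_eq_iff (hhalf s) (hhalf t), sphereParam_eq_iff, hemb.injective.eq_iff, ht]
  have hA : Continuous A := hemb.continuous
  have hcont : Continuous fun p : Set.Icc (0 : ℝ) 1 × Circle => spinCircle (A p.1) p.2 := by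
    unfold spinCircle
    refine (PiLp.continuous_toLp 2 _).comp (continuous_pi fun i => ?_)
    fin_cases i <;> simp <;> fun_prop
  rw [spinSet_range_eq, ← range_sphereParam]
  exact nonempty_homeomorph_range_of_eq_iff hcont continuous_sphereParam hfib
end

section
/- Let ρ > 0. In the Euclidean plane ℝ², the circle of radius (√3/2)·ρ centered at the origin is contained in the union of the six closed disks of radius ρ/√2 centered at the points (ρ·cos(kπ/3), ρ·sin(kπ/3)) for k = 0, 1, …, 5. -/
/-- The support function of the six vectors `(±1, 0)`, `(±1/2, ±√3/2)`: a vector of norm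
`(√3/2)·ρ` has inner product at least `(5/8)·ρ` with one of them. -/
lemma exists_hexagon_inner_ge {ρ x y : ℝ} (hρ : 0 < ρ) (h : x ^ 2 + y ^ 2 = 3 / 4 * ρ ^ 2) :
    5 / 8 * ρ ≤ |x| ∨ 5 / 8 * ρ ≤ |x| / 2 + √3 / 2 * |y| := by
  by_contra! hlt
  obtain ⟨hx, hxy⟩ := hlt
  have hx0 := abs_nonneg x
  have hq0 : 0 ≤ √3 / 2 * |y| := by positivity
  have hq : (√3 / 2 * |y|) ^ 2 = 3 / 4 * y ^ 2 := by
    rw [mul_pow, div_pow, Real.sq_sqrt (by norm_num), sq_abs]; norm_num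
  rw [← sq_abs x] at h
  generalize √3 / 2 * |y| = q at *
  nlinarith [mul_nonneg hx0 (sub_nonneg.2 hx.le), mul_pos hρ hρ,
    pow_le_pow_left₀ hq0 (by linarith : q ≤ 5 / 8 * ρ - |x| / 2) 2]

/-- A vector of norm `(√3/2)·ρ` whose inner product with the unit vector `(cos θ, sin θ)` is at
least `(5/8)·ρ` lies in the closed disk of radius `ρ/√2` centered at `ρ·(cos θ, sin θ)`. -/
lemma mem_closedBall_of_inner_ge {ρ θ : ℝ} (hρ : 0 < ρ) {p : EuclideanSpace ℝ (Fin 2)}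
    (h : p 0 ^ 2 + p 1 ^ 2 = 3 / 4 * ρ ^ 2)
    (hθ : 5 / 8 * ρ ≤ p 0 * Real.cos θ + p 1 * Real.sin θ) :
    p ∈ Metric.closedBall
      ((WithLp.equiv 2 (Fin 2 → ℝ)).symm ![ρ * Real.cos θ, ρ * Real.sin θ]) (ρ / √2) := by
  rw [Metric.mem_closedBall, EuclideanSpace.dist_eq]
  apply Real.sqrt_le_iff.2 ⟨by positivity, ?_⟩
  rw [div_pow, Real.sq_sqrt (by norm_num)]
  simp only [Fin.sum_univ_two, Real.dist_eq, sq_abs, WithLp.equiv_symm_apply,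
    Matrix.cons_val_zero, Matrix.cons_val_one]
  linear_combination h + 2 * ρ * hθ + ρ ^ 2 * Real.sin_sq_add_cos_sq θ

/-- The circle of radius `(√3/2)·ρ` centered at the origin of the Euclidean plane is contained
in the union of the six closed disks of radius `ρ/√2` centered at the vertices
`(ρ·cos(kπ/3), ρ·sin(kπ/3))`, `k = 0, …, 5`, of a regular hexagon. -/
theorem circle_subset_union_six_disks (ρ : ℝ) (hρ : 0 < ρ) :
    Metric.sphere (0 : EuclideanSpace ℝ (Fin 2)) (Real.sqrt 3 / 2 * ρ) ⊆
      ⋃ k : Fin 6,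
        Metric.closedBall
          ((WithLp.equiv 2 (Fin 2 → ℝ)).symm
            ![ρ * Real.cos (k * Real.pi / 3), ρ * Real.sin (k * Real.pi / 3)])
          (ρ / Real.sqrt 2) := by
  intro p hp
  have h : p 0 ^ 2 + p 1 ^ 2 = 3 / 4 * ρ ^ 2 := by
    have hn := congrArg (· ^ 2) (mem_sphere_zero_iff_norm.1 hp)
    simp only [EuclideanSpace.real_norm_sq_eq, Fin.sum_univ_two, mul_pow, div_pow] at hn
    rw [hn, Real.sq_sqrt (by norm_num)]; norm_num
  suffices hk : ∃ k : Fin 6, 5 / 8 * ρ ≤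
      p 0 * Real.cos (k * Real.pi / 3) + p 1 * Real.sin (k * Real.pi / 3) by
    obtain ⟨k, hk⟩ := hk
    exact Set.mem_iUnion.2 ⟨k, mem_closedBall_of_inner_ge hρ h hk⟩
  have e2 : 2 * Real.pi / 3 = Real.pi - Real.pi / 3 := by ring
  have e3 : 3 * Real.pi / 3 = Real.pi := by ring
  have e4 : 4 * Real.pi / 3 = Real.pi / 3 + Real.pi := by ring
  have e5 : 5 * Real.pi / 3 = 2 * Real.pi - Real.pi / 3 := by ring
  have hmax := exists_hexagon_inner_ge hρ h
  simp only [Fin.exists_fin_succ, Fin.exists_fin_zero]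
  norm_num [Fin.val_succ, e2, e3, e4, e5, Real.cos_pi_sub, Real.sin_pi_sub, Real.cos_add_pi,
    Real.sin_add_pi, Real.cos_two_pi_sub, Real.sin_two_pi_sub]
  by_contra! hlt
  obtain ⟨h0, h1, h2, h3, h4, h5⟩ := hlt
  rcases abs_cases (p 0) with ⟨hx, -⟩ | ⟨hx, -⟩ <;>
  rcases abs_cases (p 1) with ⟨hy, -⟩ | ⟨hy, -⟩ <;>
  rw [hx, hy] at hmax <;>
  rcases hmax with hmax | hmax <;>
  linarith
end

section
/- Let A : [0,1] → ℝ⁴ be a topological embedding with image in the half-space ℝ³₊ = {x ∈ ℝ⁴ : x₄ = 0, x₃ ≥ 0}, with A(0) ≠ A(1) lying in the boundary plane {x₃ = 0, x₄ = 0} and with (A(t))₃ > 0 for t ∈ (0,1). Then for suitable basepoints the fundamental group of ℝ⁴ ∖ Spin(A([0,1])) is isomorphic to the fundamental group of ℝ³₊ ∖ A([0,1]). -/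
section SpunComplement

open unitInterval Set

/-- The two boundary paths of a square that join opposite corners are homotopic. -/
theorem Path.homotopic_of_square {X : Type*} [TopologicalSpace X] {a b c d : X}
    (F : C(I × I, X)) {p : Path a b} {q : Path b d} {p' : Path a c} {q' : Path c d}
    (hp : ∀ t, F (0, t) = p t) (hq : ∀ s, F (s, 1) = q s)
    (hp' : ∀ s, F (s, 0) = p' s) (hq' : ∀ t, F (1, t) = q' t) :
    (p.trans q).Homotopic (p'.trans q') := by
  obtain rfl : F (0, 0) = a := by simpa using hp 0
  obtain rfl : F (0, 1) = b := by simpa using hp 1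
  obtain rfl : F (1, 0) = c := by simpa using hp' 1
  obtain rfl : F (1, 1) = d := by simpa using hq 1
  let e : Path (0 : I) 1 := ⟨ContinuousMap.id I, rfl, rfl⟩
  obtain rfl : ((Path.refl 0).prod e).map F.continuous = p := by
    ext t; exact hp t
  obtain rfl : (e.prod (Path.refl 1)).map F.continuous = q := by
    ext t; exact hq t
  obtain rfl : (e.prod (Path.refl 0)).map F.continuous = p' := by
    ext t; exact hp' t
  obtain rfl : ((Path.refl 1).prod e).map F.continuous = q' := by
    ext t; exact hq' t
  rw [← Path.map_trans, ← Path.map_trans]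
  have : ContractibleSpace I := (convex_Icc (0 : ℝ) 1).contractibleSpace ⟨0, by simp⟩
  exact (SimplyConnectedSpace.paths_homotopic _ _).map F

theorem Path.homotopic_of_forall_mem_convex {E : Type*} [AddCommGroup E] [Module ℝ E]
    [TopologicalSpace E] [IsTopologicalAddGroup E] [ContinuousSMul ℝ E] {s B : Set E}
    (hB : Convex ℝ B) (hBs : B ⊆ s) {a b : s} {p q : Path a b}
    (hp : ∀ t, (p t : E) ∈ B) (hq : ∀ t, (q t : E) ∈ B) : p.Homotopic q := by
  refine ⟨⟨⟨⟨fun x => ⟨AffineMap.lineMap (p x.2 : E) (q x.2 : E) (x.1 : ℝ),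
    hBs (hB.lineMap_mem (hp _) (hq _) x.1.2)⟩, ?_⟩, ?_, ?_⟩, ?_⟩⟩
  · simp only [AffineMap.lineMap_apply_module]
    fun_prop
  · intro t
    simp
  · intro t
    simp
  · rintro t x (rfl | rfl) <;> simp

/-- A property of paths that is invariant under homotopy, closed under concatenation, and true of
sufficiently small paths, is true of all paths. -/
theorem Path.induction_of_local {X : Type*} [TopologicalSpace X]
    {Q : ∀ a b : X, Path a b → Prop}
    (hhom : ∀ {a b} {p q : Path a b}, p.Homotopic q → Q a b p → Q a b q)
    (htrans : ∀ {a b c} {p : Path a b} {q : Path b c}, Q a b p → Q b c q → Q a c (p.trans q))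
    (hloc : ∀ x, ∃ U ∈ nhds x, ∀ {a b} (p : Path a b), range p ⊆ U → Q a b p)
    {a b : X} (p : Path a b) : Q a b p := by
  choose U hU hQ using hloc
  obtain ⟨t, ht0, hmono, ⟨n, hn⟩, ht⟩ :=
    exists_monotone_Icc_subset_open_cover_unitInterval
      (fun x => (isOpen_interior (s := U x)).preimage p.continuous)
      (fun s _ => mem_iUnion.2 ⟨p s, mem_interior_iff_mem_nhds.2 (hU _)⟩)
  have key : ∀ k, Q _ _ (p.subpath 0 (t k)) := by
    intro k
    induction k with
    | zero =>
      rw [ht0, Path.subpath_self]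
      refine hQ (p 0) _ ?_
      rintro _ ⟨s, rfl⟩
      exact mem_of_mem_nhds (hU _)
    | succ k ih =>
      obtain ⟨x, hx⟩ := ht k
      refine hhom ⟨Path.Homotopy.subpathTransSubpath p 0 (t k) (t (k + 1))⟩ (htrans ih ?_)
      refine hQ x _ ?_
      rw [Path.range_subpath_of_le _ _ _ (hmono k.le_succ)]
      exact image_subset_iff.2 fun s hs => interior_subset (s := U x) (hx hs)
  have h1 := key n
  rw [hn n le_rfl, Path.subpath_zero_one] at h1
  have hcast : ∀ {a' b' : X} (ha : a' = a) (hb : b' = b), Q a' b' (p.cast ha hb) → Q a b p := by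
    rintro _ _ rfl rfl h
    exact h
  exact hcast _ _ h1

/-- The point of the half-space that is rotated to `x`. -/
noncomputable def spinProj (x : EuclideanSpace ℝ (Fin 4)) : EuclideanSpace ℝ (Fin 4) :=
  !₂[x 0, x 1, √(x 2 ^ 2 + x 3 ^ 2), 0]

theorem continuous_spinProj : Continuous spinProj := by
  unfold spinProj
  refine (PiLp.continuous_toLp 2 _).comp (continuous_pi fun i => ?_)
  fin_cases i <;> simp <;> fun_prop

theorem continuous_spinRot :
    Continuous fun p : ℝ × EuclideanSpace ℝ (Fin 4) => spinRot p.1 p.2 := by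
  unfold spinRot
  refine (PiLp.continuous_toLp 2 _).comp (continuous_pi fun i => ?_)
  fin_cases i <;> simp <;> fun_prop

theorem spinProj_mem_halfSpace3 (x : EuclideanSpace ℝ (Fin 4)) : spinProj x ∈ halfSpace3 := by
  simp [spinProj, halfSpace3]

theorem spinProj_spinRot {x : EuclideanSpace ℝ (Fin 4)} (hx : x ∈ halfSpace3) (θ : ℝ) :
    spinProj (spinRot θ x) = x := by
  obtain ⟨h3, h2⟩ := hx
  have : √((x 2 * Real.cos θ) ^ 2 + (x 2 * Real.sin θ) ^ 2) = x 2 := by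
    rw [mul_pow, mul_pow, ← mul_add, Real.cos_sq_add_sin_sq, mul_one, Real.sqrt_sq h2]
  ext i
  fin_cases i <;> simp [spinProj, spinRot, this, h3]

theorem spinRot_eq_of_apply_two_eq_zero {x : EuclideanSpace ℝ (Fin 4)} (hx : x 2 = 0) (θ θ' : ℝ) :
    spinRot θ x = spinRot θ' x := by
  simp [spinRot, hx]

theorem spinRot_spinProj {θ : ℝ} {x : EuclideanSpace ℝ (Fin 4)}
    (h : (⟨x 2, x 3⟩ : ℂ) = ‖(⟨x 2, x 3⟩ : ℂ)‖ * Complex.exp (θ * Complex.I)) :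
    spinRot θ (spinProj x) = x := by
  have hn : ‖(⟨x 2, x 3⟩ : ℂ)‖ = √(x 2 ^ 2 + x 3 ^ 2) := by
    rw [Complex.norm_def, Complex.normSq_mk, ← sq, ← sq]
  rw [hn] at h
  have hre := congrArg Complex.re h
  have him := congrArg Complex.im h
  simp only [Complex.re_ofReal_mul, Complex.im_ofReal_mul, Complex.exp_ofReal_mul_I_re,
    Complex.exp_ofReal_mul_I_im] at hre him
  ext i
  fin_cases i <;> simp [spinRot, spinProj, ← hre, ← him]

theorem dist_spinRot_spinProj {y : EuclideanSpace ℝ (Fin 4)} (h2 : y 2 = 0) (h3 : y 3 = 0)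
    (θ : ℝ) (x : EuclideanSpace ℝ (Fin 4)) : dist (spinRot θ (spinProj x)) y = dist x y := by
  have hs : √(x 2 ^ 2 + x 3 ^ 2) ^ 2 = x 2 ^ 2 + x 3 ^ 2 := Real.sq_sqrt (by positivity)
  rw [EuclideanSpace.dist_eq, EuclideanSpace.dist_eq]
  congr 1
  simp only [Fin.sum_univ_four, Real.dist_eq, sq_abs, h2, h3, spinRot, spinProj]
  simp [mul_pow, hs]
  linear_combination (x 2 ^ 2 + x 3 ^ 2) * Real.cos_sq_add_sin_sq θ

theorem exists_spinRot_spinProj (x : EuclideanSpace ℝ (Fin 4)) :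
    ∃ θ, spinRot θ (spinProj x) = x :=
  ⟨_, spinRot_spinProj (Complex.norm_mul_exp_arg_mul_I _).symm⟩

theorem spinProj_mem_of_notMem_spinSet {K : Set (EuclideanSpace ℝ (Fin 4))}
    {x : EuclideanSpace ℝ (Fin 4)} (hx : x ∉ SpinSet K) : spinProj x ∈ halfSpace3 \ K := by
  refine ⟨spinProj_mem_halfSpace3 x, fun h => hx ?_⟩
  obtain ⟨θ, hθ⟩ := exists_spinRot_spinProj x
  exact ⟨_, h, θ, hθ.symm⟩

theorem spinRot_notMem_spinSet {K : Set (EuclideanSpace ℝ (Fin 4))} (hK : K ⊆ halfSpace3)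
    {x : EuclideanSpace ℝ (Fin 4)} (hx : x ∈ halfSpace3 \ K) (θ : ℝ) :
    spinRot θ x ∉ SpinSet K := by
  rintro ⟨z, hz, φ, h⟩
  have h' := congrArg spinProj h
  rw [spinProj_spinRot hx.1, spinProj_spinRot (hK hz)] at h'
  exact hx.2 (h' ▸ hz)

theorem isOpen_compl_spinSet {K : Set (EuclideanSpace ℝ (Fin 4))} (hK : K ⊆ halfSpace3)
    (hcl : IsClosed K) : IsOpen (SpinSet K)ᶜ := by
  convert hcl.isOpen_compl.preimage continuous_spinProj using 1
  ext x
  refine ⟨fun hx => (spinProj_mem_of_notMem_spinSet hx).2, fun hx => ?_⟩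
  obtain ⟨θ, hθ⟩ := exists_spinRot_spinProj x
  exact hθ ▸ spinRot_notMem_spinSet hK ⟨spinProj_mem_halfSpace3 x, hx⟩ θ

/-- The retraction of the complement of `SpinSet K` onto the complement of `K` in the half-space. -/
noncomputable def spinRetract (K : Set (EuclideanSpace ℝ (Fin 4))) :
    C(↥((SpinSet K)ᶜ), ↥(halfSpace3 \ K)) where
  toFun y := ⟨spinProj y, spinProj_mem_of_notMem_spinSet y.2⟩
  continuous_toFun := (continuous_spinProj.comp continuous_subtype_val).subtype_mk _

/-- Rotation by a variable angle, from the complement of `K` in the half-space to the complement of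
`SpinSet K`. -/
noncomputable def spinAction {K : Set (EuclideanSpace ℝ (Fin 4))} (hK : K ⊆ halfSpace3) :
    C(ℝ × ↥(halfSpace3 \ K), ↥((SpinSet K)ᶜ)) where
  toFun z := ⟨spinRot z.1 z.2, spinRot_notMem_spinSet hK z.2.2 z.1⟩
  continuous_toFun := (continuous_spinRot.comp
    (continuous_fst.prodMk (continuous_subtype_val.comp continuous_snd))).subtype_mk _

/-- The inclusion of the complement of `K` in the half-space into the complement of `SpinSet K`. -/
noncomputable def spinIncl {K : Set (EuclideanSpace ℝ (Fin 4))} (hK : K ⊆ halfSpace3) :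
    C(↥(halfSpace3 \ K), ↥((SpinSet K)ᶜ)) :=
  (spinAction hK).comp ((ContinuousMap.const _ 0).prodMk (ContinuousMap.id _))

variable {K : Set (EuclideanSpace ℝ (Fin 4))} (hK : K ⊆ halfSpace3)

theorem spinRetract_spinAction (θ : ℝ) (m : ↥(halfSpace3 \ K)) :
    spinRetract K (spinAction hK (θ, m)) = m :=
  Subtype.ext (spinProj_spinRot m.2.1 θ)

theorem spinRetract_spinIncl (m : ↥(halfSpace3 \ K)) : spinRetract K (spinIncl hK m) = m :=
  spinRetract_spinAction hK 0 m

theorem exists_spinAction_spinRetract (y : ↥((SpinSet K)ᶜ)) :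
    ∃ θ, spinAction hK (θ, spinRetract K y) = y :=
  (exists_spinRot_spinProj (y : EuclideanSpace ℝ (Fin 4))).imp fun _ h => Subtype.ext h

theorem spinAction_eq_spinIncl {m : ↥(halfSpace3 \ K)}
    (hm : (m : EuclideanSpace ℝ (Fin 4)) 2 = 0) (θ : ℝ) :
    spinAction hK (θ, m) = spinIncl hK m :=
  Subtype.ext (spinRot_eq_of_apply_two_eq_zero hm θ 0)

/-- The circular arc traced by a point of the half-space as it is rotated to `y`. -/
noncomputable def spinArc {m : ↥(halfSpace3 \ K)} {y : ↥((SpinSet K)ᶜ)} {θ : ℝ}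
    (h : spinAction hK (θ, m) = y) : Path (spinIncl hK m) y where
  toFun s := spinAction hK (s * θ, m)
  continuous_toFun := by fun_prop
  source' := by simp [spinIncl]
  target' := by simp [h]

theorem spinArc_apply {m : ↥(halfSpace3 \ K)} {y : ↥((SpinSet K)ᶜ)} {θ : ℝ}
    (h : spinAction hK (θ, m) = y) (s : I) : spinArc hK h s = spinAction hK (s * θ, m) :=
  rfl

/-- Rotating a path that ends on the axis shows that a circular arc, followed by the
rotated path, is homotopic to the original path. -/
theorem spinArc_trans_homotopic {m p : ↥(halfSpace3 \ K)} {y : ↥((SpinSet K)ᶜ)} {θ : ℝ}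
    (h : spinAction hK (θ, m) = y) (hp : (p : EuclideanSpace ℝ (Fin 4)) 2 = 0) (ω : Path m p)
    {τ : Path y (spinIncl hK p)} (hτ : ∀ t, τ t = spinAction hK (θ, ω t)) :
    ((spinArc hK h).trans τ).Homotopic (ω.map (spinIncl hK).continuous) := by
  let F : C(I × I, ↥((SpinSet K)ᶜ)) :=
    (spinAction hK).comp ⟨fun x => (x.1 * θ, ω x.2), by fun_prop⟩
  have hF : ∀ x, F x = spinAction hK (x.1 * θ, ω x.2) := fun _ => rfl
  refine .trans (.symm <| Path.homotopic_of_square F (p := ω.map (spinIncl hK).continuous)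
    (q := Path.refl _) ?_ ?_ ?_ ?_) (Path.Homotopic.trans_refl _)
  · intro t
    simp [hF]
    rfl
  · intro s
    simp [hF, spinAction_eq_spinIncl hK hp]
  · intro s
    simp [hF, spinArc_apply]
  · intro t
    simp [hF, hτ]

theorem spinArc_homotopic {m p : ↥(halfSpace3 \ K)} {y : ↥((SpinSet K)ᶜ)} {θ θ' : ℝ}
    (h : spinAction hK (θ, m) = y) (h' : spinAction hK (θ', m) = y)
    (hp : (p : EuclideanSpace ℝ (Fin 4)) 2 = 0) (hmp : Joined m p) :
    (spinArc hK h).Homotopic (spinArc hK h') := by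
  by_cases hm : (m : EuclideanSpace ℝ (Fin 4)) 2 = 0
  · have : spinArc hK h = spinArc hK h' := by
      refine Path.ext (funext fun s => ?_)
      simp [spinArc_apply, spinAction_eq_spinIncl hK hm]
    rw [this]
  obtain ⟨ω⟩ := hmp
  have hval : spinRot θ (m : EuclideanSpace ℝ (Fin 4)) = spinRot θ' m :=
    congrArg Subtype.val (h.trans h'.symm)
  have hcos : Real.cos θ = Real.cos θ' := by
    simpa [spinRot, hm] using congrArg (fun v : EuclideanSpace ℝ (Fin 4) => v 2) hval
  have hsin : Real.sin θ = Real.sin θ' := by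
    simpa [spinRot, hm] using congrArg (fun v : EuclideanSpace ℝ (Fin 4) => v 3) hval
  have hrot : ∀ n, spinAction hK (θ, n) = spinAction hK (θ', n) := fun n =>
    Subtype.ext (by simp [spinAction, spinRot, hcos, hsin])
  let τ : Path y (spinIncl hK p) :=
    { toFun := fun t => spinAction hK (θ, ω t)
      continuous_toFun := by fun_prop
      source' := by simp [h]
      target' := by simp [spinAction_eq_spinIncl hK hp] }
  have e₁ := spinArc_trans_homotopic hK h hp ω (τ := τ) fun _ => rfl
  have e₂ := spinArc_trans_homotopic hK h' hp ω (τ := τ) fun t => hrot (ω t)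
  have e := Path.Homotopic.Quotient.eq.2 (e₁.trans e₂.symm)
  rw [Path.Homotopic.Quotient.mk_trans, Path.Homotopic.Quotient.mk_trans] at e
  have e' := congrArg (fun z => z.trans (Path.Homotopic.Quotient.mk τ).symm) e
  simp only [Path.Homotopic.Quotient.trans_assoc, Path.Homotopic.Quotient.trans_symm,
    Path.Homotopic.Quotient.trans_refl] at e'
  exact Path.Homotopic.Quotient.exact e'

theorem spinArc_natural_local (hcl : IsClosed K) {p : ↥(halfSpace3 \ K)}
    (hp : (p : EuclideanSpace ℝ (Fin 4)) 2 = 0) (y : ↥((SpinSet K)ᶜ)) :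
    ∃ U ∈ nhds y, ∀ {a b : ↥((SpinSet K)ᶜ)} (γ : Path a b), range γ ⊆ U →
      Joined (spinRetract K a) p → ∀ {θ θ' : ℝ} (h : spinAction hK (θ, spinRetract K a) = a)
        (h' : spinAction hK (θ', spinRetract K b) = b),
        ((γ.map ((spinIncl hK).comp (spinRetract K)).continuous).trans (spinArc hK h')).Homotopic
          ((spinArc hK h).trans γ) := by
  by_cases hy : (y : EuclideanSpace ℝ (Fin 4)) 2 = 0 ∧ (y : EuclideanSpace ℝ (Fin 4)) 3 = 0
  · obtain ⟨ε, hε, hball⟩ := Metric.isOpen_iff.1 (isOpen_compl_spinSet hK hcl) y y.2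
    refine ⟨Metric.ball y ε, Metric.ball_mem_nhds y hε, fun {a b} γ hγ _ θ θ' h h' => ?_⟩
    have hact : ∀ (φ : ℝ) (z : ↥((SpinSet K)ᶜ)), z ∈ Metric.ball y ε →
        (spinAction hK (φ, spinRetract K z) : EuclideanSpace ℝ (Fin 4)) ∈
          Metric.ball (y : EuclideanSpace ℝ (Fin 4)) ε := fun φ z hz =>
      (dist_spinRot_spinProj hy.1 hy.2 φ z).trans_lt hz
    have hγ' : ∀ t, γ t ∈ Metric.ball y ε := fun t => hγ (mem_range_self t)
    have ha : a ∈ Metric.ball y ε := by simpa using hγ' 0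
    have hb : b ∈ Metric.ball y ε := by simpa using hγ' 1
    have htrans : ∀ {u v w : ↥((SpinSet K)ᶜ)} {f : Path u v} {g : Path v w},
        range f ⊆ Metric.ball y ε → range g ⊆ Metric.ball y ε →
        ∀ t, ((f.trans g) t : EuclideanSpace ℝ (Fin 4)) ∈
          Metric.ball (y : EuclideanSpace ℝ (Fin 4)) ε := by
      intro u v w f g hf hg t
      have ht : (f.trans g) t ∈ range f ∪ range g :=
        Path.trans_range f g ▸ mem_range_self t
      exact union_subset hf hg ht
    refine Path.homotopic_of_forall_mem_convex (convex_ball _ ε) hball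
      (htrans ?_ ?_) (htrans ?_ hγ)
    · rintro _ ⟨t, rfl⟩
      exact hact 0 _ (hγ' t)
    · rintro _ ⟨t, rfl⟩
      exact hact _ _ hb
    · rintro _ ⟨t, rfl⟩
      exact hact _ _ ha
  · let w : ↥((SpinSet K)ᶜ) → ℂ := fun z =>
      ⟨(z : EuclideanSpace ℝ (Fin 4)) 2, (z : EuclideanSpace ℝ (Fin 4)) 3⟩
    have hw : Continuous w := by
      have : w = fun z : ↥((SpinSet K)ᶜ) =>
          (((z : EuclideanSpace ℝ (Fin 4)) 2 : ℝ) : ℂ) +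
          (((z : EuclideanSpace ℝ (Fin 4)) 3 : ℝ) : ℂ) * Complex.I := by
        ext z
        exact Complex.mk_eq_add_mul_I _ _
      rw [this]
      fun_prop
    have hwy : w y ≠ 0 := fun h0 => hy ⟨congrArg Complex.re h0, congrArg Complex.im h0⟩
    refine ⟨{z | w z / w y ∈ Complex.slitPlane}, ?_, fun {a b} γ hγ hj θ θ' h h' => ?_⟩
    · exact (Complex.isOpen_slitPlane.preimage (hw.div_const _)).mem_nhds
        (by simp [hwy])
    let φ : ↥((SpinSet K)ᶜ) → ℝ := fun z => (w z / w y).arg + (w y).arg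
    have hφ : ∀ z, spinAction hK (φ z, spinRetract K z) = z := by
      intro z
      refine Subtype.ext (spinRot_spinProj ?_)
      change w z = ‖w z‖ * _
      have h₁ := Complex.norm_mul_exp_arg_mul_I (w z / w y)
      have h₂ := Complex.norm_mul_exp_arg_mul_I (w y)
      rw [norm_div] at h₁
      have h₃ : (‖w y‖ : ℂ) ≠ 0 := by simpa using hwy
      push_cast [φ]
      rw [add_mul, Complex.exp_add]
      calc w z = w z / w y * w y := (div_mul_cancel₀ _ hwy).symm
        _ = ((‖w z‖ / ‖w y‖ : ℝ) * Complex.exp ((w z / w y).arg * Complex.I)) *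
            (‖w y‖ * Complex.exp ((w y).arg * Complex.I)) := by rw [h₁, h₂]
        _ = _ := by
          push_cast
          field_simp
    have hφγ : Continuous fun t => φ (γ t) := by
      refine Continuous.add ?_ continuous_const
      refine continuous_iff_continuousAt.2 fun t => ?_
      exact ContinuousAt.comp (f := fun t => w (γ t) / w y)
        (Complex.continuousAt_arg (hγ (mem_range_self t)))
        ((hw.div_const _).comp γ.continuous).continuousAt
    have hjb : Joined (spinRetract K b) p :=
      (Joined.symm ⟨γ.map (spinRetract K).continuous⟩).trans hj
    have hsq := Path.homotopic_of_square
      (p := γ.map ((spinIncl hK).comp (spinRetract K)).continuous) (q := spinArc hK (hφ b))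
      (p' := spinArc hK (hφ a)) (q' := γ)
      ((spinAction hK).comp ⟨fun x : I × I => (x.1 * φ (γ x.2), spinRetract K (γ x.2)),
        ((continuous_subtype_val.comp continuous_fst).mul (hφγ.comp continuous_snd)).prodMk
          ((spinRetract K).continuous.comp (γ.continuous.comp continuous_snd))⟩)
      (fun t => by simp; rfl) (fun s => by simp [spinArc_apply])
      (fun s => by simp [spinArc_apply]) (fun t => by simp [hφ])
    exact ((Path.Homotopic.refl _).hcomp (spinArc_homotopic hK h' (hφ b) hp hjb)).trans
      (hsq.trans ((spinArc_homotopic hK (hφ a) h hp hj).hcomp (Path.Homotopic.refl _)))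

/-- Circular arcs intertwine a path with its retraction to the half-space. -/
theorem spinArc_natural (hcl : IsClosed K) {p : ↥(halfSpace3 \ K)}
    (hp : (p : EuclideanSpace ℝ (Fin 4)) 2 = 0) {a b : ↥((SpinSet K)ᶜ)} (γ : Path a b)
    (hj : Joined (spinRetract K a) p) {θ θ' : ℝ} (h : spinAction hK (θ, spinRetract K a) = a)
    (h' : spinAction hK (θ', spinRetract K b) = b) :
    ((γ.map ((spinIncl hK).comp (spinRetract K)).continuous).trans (spinArc hK h')).Homotopic
      ((spinArc hK h).trans γ) := by
  refine Path.induction_of_local (X := ↥((SpinSet K)ᶜ)) (Q := fun a b γ =>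
      Joined (spinRetract K a) p → ∀ {θ θ' : ℝ} (h : spinAction hK (θ, spinRetract K a) = a)
        (h' : spinAction hK (θ', spinRetract K b) = b),
        ((γ.map ((spinIncl hK).comp (spinRetract K)).continuous).trans (spinArc hK h')).Homotopic
          ((spinArc hK h).trans γ)) ?_ ?_ (spinArc_natural_local hK hcl hp) γ hj h h'
  · intro a b γ δ hγδ hγ hj θ θ' h h'
    exact (((hγδ.symm.map _).hcomp (.refl _)).trans (hγ hj h h')).trans
      ((Path.Homotopic.refl _).hcomp hγδ)
  · intro a b c γ δ hγ hδ hj θ θ' h h'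
    obtain ⟨φ, hφ⟩ := exists_spinAction_spinRetract hK b
    have hjb : Joined (spinRetract K b) p :=
      (Joined.symm ⟨γ.map (spinRetract K).continuous⟩).trans hj
    have e₁ := Path.Homotopic.Quotient.eq.2 (hγ hj h hφ)
    have e₂ := Path.Homotopic.Quotient.eq.2 (hδ hjb hφ h')
    apply Path.Homotopic.Quotient.exact
    rw [Path.map_trans]
    simp only [Path.Homotopic.Quotient.mk_trans] at e₁ e₂ ⊢
    rw [Path.Homotopic.Quotient.trans_assoc, e₂, ← Path.Homotopic.Quotient.trans_assoc, e₁,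
      Path.Homotopic.Quotient.trans_assoc]

theorem spinIncl_map_injective (p : ↥(halfSpace3 \ K)) :
    Function.Injective (FundamentalGroup.map (spinIncl hK) p) := by
  intro α β hαβ
  induction α using Path.Homotopic.Quotient.ind with | mk α
  induction β using Path.Homotopic.Quotient.ind with | mk β
  have hh : (α.map (spinIncl hK).continuous).Homotopic (β.map (spinIncl hK).continuous) :=
    Path.Homotopic.Quotient.exact hαβ
  have hret := spinRetract_spinIncl hK
  have h2 := (hh.map (spinRetract K)).pathCast (hret p).symm (hret p).symm
  apply Path.Homotopic.Quotient.eq.2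
  convert h2 using 1 <;> exact Path.ext (funext fun t => (hret _).symm)

theorem Path.homotopic_cast_of_trans_homotopic {X : Type*} [TopologicalSpace X] {a a' : X}
    {δ : Path a' a'} {γ : Path a a} {ρ : Path a' a} (ha : a = a') (hρ : ∀ t, ρ t = a)
    (h : (δ.trans ρ).Homotopic (ρ.trans γ)) : (δ.cast ha ha).Homotopic γ := by
  subst ha
  obtain rfl : ρ = Path.refl a := by
    ext t
    exact hρ t
  exact (Path.Homotopic.trans_refl δ).symm.trans (h.trans (Path.Homotopic.refl_trans γ))

theorem spinIncl_map_surjective (hcl : IsClosed K) {p : ↥(halfSpace3 \ K)}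
    (hp : (p : EuclideanSpace ℝ (Fin 4)) 2 = 0) :
    Function.Surjective (FundamentalGroup.map (spinIncl hK) p) := by
  intro α
  induction α using Path.Homotopic.Quotient.ind with | mk γ
  have hret := spinRetract_spinIncl hK p
  refine ⟨Path.Homotopic.Quotient.mk
    ((γ.map (spinRetract K).continuous).cast hret.symm hret.symm), ?_⟩
  have h : spinAction hK (0, spinRetract K (spinIncl hK p)) = spinIncl hK p := by
    rw [hret]
    rfl
  have hn := spinArc_natural hK hcl hp γ (by rw [hret]) h h
  refine Path.Homotopic.Quotient.eq.2
    (Path.homotopic_cast_of_trans_homotopic (congrArg (spinIncl hK) hret).symm (fun t => ?_) hn)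
  simp [spinArc_apply, h]

end SpunComplement

/-- For an embedded arc `A` in the half-space `ℝ³₊` with endpoints on the boundary plane and
interior strictly above it, the fundamental group of `ℝ⁴ ∖ Spin(A)` is isomorphic (for suitable
basepoints) to the fundamental group of `ℝ³₊ ∖ A`. -/
theorem fundamentalGroup_complement_spin_iso
    (A : Set.Icc (0 : ℝ) 1 → EuclideanSpace ℝ (Fin 4))
    (hemb : Topology.IsEmbedding A)
    (hhalf : ∀ t, A t ∈ halfSpace3)
    (hne : A ⟨0, by norm_num⟩ ≠ A ⟨1, by norm_num⟩)
    (h0 : A ⟨0, by norm_num⟩ ∈ boundaryPlane)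
    (h1 : A ⟨1, by norm_num⟩ ∈ boundaryPlane)
    (hint : ∀ t : Set.Icc (0 : ℝ) 1, 0 < (t : ℝ) → (t : ℝ) < 1 → 0 < A t 2) :
    ∃ (x : ↥((SpinSet (Set.range A))ᶜ)) (y : ↥(halfSpace3 \ Set.range A)),
      Nonempty (FundamentalGroup ↥((SpinSet (Set.range A))ᶜ) x ≃*
        FundamentalGroup ↥(halfSpace3 \ Set.range A) y) := by
  have hK : Set.range A ⊆ halfSpace3 := Set.range_subset_iff.2 hhalf
  have hcomp : IsCompact (Set.range A) := isCompact_range hemb.continuous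
  obtain ⟨R, hR⟩ := hcomp.isBounded.exists_norm_le
  let p : EuclideanSpace ℝ (Fin 4) := EuclideanSpace.single 0 (|R| + 1)
  have hpK : p ∉ Set.range A := fun h => by
    have h' := hR p h
    rw [PiLp.norm_single, Real.norm_of_nonneg (by positivity)] at h'
    linarith [le_abs_self R]
  have hp : p ∈ halfSpace3 := by simp [p, halfSpace3]
  exact ⟨_, ⟨p, hp, hpK⟩, ⟨(MulEquiv.ofBijective _ ⟨spinIncl_map_injective hK ⟨p, hp, hpK⟩,
    spinIncl_map_surjective hK hcomp.isClosed (by simp [p])⟩).symm⟩⟩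
end
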